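/- Let G be any subgroup of SL(2,ℂ) of order 120 under which F(x,y) = x·y·(x^10 − 11x^5y^5 − y^10) is invariant (F(A·(x,y)) = F(x,y) for all A ∈ G). Then: (i) every homogeneous polynomial P ∈ ℂ[x,y] of degree 12 invariant under every element of G is a scalar multiple of F; and (ii) every homogeneous polynomial P ∈ ℂ[x,y] of degree 20 invariant under every element of G is a scalar multiple of H(x,y) = x^20 + 228x^15y^5 + 494x^10y^10 − 228x^5y^15 + y^20. -/

import Mathlib

open MvPolynomial

/-- Substitution of the linear map given by a 2×2 matrix `A` into a two-variable
polynomial: `G(A·(x,y)) = G(ax+by, cx+dy)`. -/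
noncomputable def subst (A : Matrix (Fin 2) (Fin 2) ℂ) (G : MvPolynomial (Fin 2) ℂ) :
    MvPolynomial (Fin 2) ℂ :=
  aeval (fun i => C (A i 0) * X 0 + C (A i 1) * X 1) G

/-- The matrix of an element of \`SL(2,ℂ)\`. -/
noncomputable def mat (A : Matrix.SpecialLinearGroup (Fin 2) ℂ) : Matrix (Fin 2) (Fin 2) ℂ := A

/-- Klein's degree-12 icosahedral form `F(x,y) = x·y·(x^10 − 11x^5y^5 − y^10)`. -/
noncomputable def F : MvPolynomial (Fin 2) ℂ :=
  X 0 * X 1 * ((X 0) ^ 10 - 11 * (X 0) ^ 5 * (X 1) ^ 5 - (X 1) ^ 10)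

/-- Klein's degree-20 icosahedral form `H`. -/
noncomputable def H : MvPolynomial (Fin 2) ℂ :=
  (X 0) ^ 20 + 228 * (X 0) ^ 15 * (X 1) ^ 5 + 494 * (X 0) ^ 10 * (X 1) ^ 10
    - 228 * (X 0) ^ 5 * (X 1) ^ 15 + (X 1) ^ 20

theorem eval_subst (A : Matrix (Fin 2) (Fin 2) ℂ) (P : MvPolynomial (Fin 2) ℂ) (x y : ℂ) :
    eval ![x, y] (subst A P) =
      eval ![A 0 0 * x + A 0 1 * y, A 1 0 * x + A 1 1 * y] P := by
  unfold subst
  induction P using MvPolynomial.induction_on with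
  | C a => simp
  | add p q hp hq => simp only [map_add, hp, hq]
  | mul_X p i hp =>
    simp only [map_mul, hp, aeval_X, eval_X]
    fin_cases i <;> simp

theorem eval_eq_of_subst_eq {A : Matrix.SpecialLinearGroup (Fin 2) ℂ}
    {P : MvPolynomial (Fin 2) ℂ} (h : subst (mat A) P = P) (x y : ℂ) :
    eval ![A 0 0 * x + A 0 1 * y, A 1 0 * x + A 1 1 * y] P = eval ![x, y] P := by
  conv_rhs => rw [← h, eval_subst]
  rfl

theorem MvPolynomial.IsHomogeneous.eval_fin_two {P : MvPolynomial (Fin 2) ℂ} {n : ℕ}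
    (hP : P.IsHomogeneous n) :
    ∃ c : ℕ → ℂ, ∀ x y : ℂ, eval ![x, y] P =
      ∑ i ∈ Finset.range (n + 1), c i * x ^ i * y ^ (n - i) := by
  refine ⟨fun i => coeff (Finsupp.single 0 i + Finsupp.single 1 (n - i)) P, fun x y => ?_⟩
  rw [eval_eq']
  simp only [Fin.prod_univ_two, Matrix.cons_val_zero, Matrix.cons_val_one]
  have hdeg : ∀ d ∈ P.support, d 0 + d 1 = n := fun d hd => by
    have := hP (mem_support_iff.mp hd)
    rw [Finsupp.weight_apply, Finsupp.sum_fintype _ _ (by simp)] at this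
    simpa using this
  have hd' : ∀ d ∈ P.support, Finsupp.single 0 (d 0) + Finsupp.single 1 (n - d 0) = d :=
    fun d hd => by
      have := hdeg d hd
      ext i
      fin_cases i
      · simp
      · simp; omega
  refine Finset.sum_bij_ne_zero (fun d _ _ => d 0) ?_ ?_ ?_ ?_
  · intro d hd _
    have := hdeg d hd
    simp; omega
  · intro d hd _ e he _ hde
    rw [← hd' d hd, ← hd' e he]
    simp only [hde]
  · intro i hi hne
    have hi' : i ≤ n := by simpa [Nat.lt_succ_iff] using hi
    have hc := left_ne_zero_of_mul (left_ne_zero_of_mul hne)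
    refine ⟨_, mem_support_iff.mpr hc, ?_, by simp⟩
    simpa [mul_assoc] using hne
  · intro d hd _
    have := hdeg d hd
    rw [hd' d hd, show n - d 0 = d 1 by omega]
    ring

/-- Invariance under `diag(ζ, ζ⁻¹)` with `ζ` of order `10` kills the coefficient of
`x ^ i * y ^ (n - i)` unless `2 * i ≡ n [MOD 10]`. -/
theorem exists_coeff_of_diagonal_invariant {P : MvPolynomial (Fin 2) ℂ} {n : ℕ}
    (hP : P.IsHomogeneous n) {ζ : ℂ} (hζ : IsPrimitiveRoot ζ 10)
    (h : ∀ x y : ℂ, eval ![ζ * x, ζ⁻¹ * y] P = eval ![x, y] P) :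
    ∃ c : ℕ → ℂ, (∀ i ≤ n, ¬ 2 * i ≡ n [MOD 10] → c i = 0) ∧
      ∀ x y : ℂ, eval ![x, y] P =
        ∑ i ∈ Finset.range (n + 1), c i * x ^ i * y ^ (n - i) := by
  obtain ⟨c, hc⟩ := hP.eval_fin_two
  refine ⟨c, fun i hi hmod => ?_, hc⟩
  have hpoly : ∑ j ∈ Finset.range (n + 1),
        Polynomial.C (c j * ζ ^ j * ζ⁻¹ ^ (n - j)) * Polynomial.X ^ j =
      ∑ j ∈ Finset.range (n + 1), Polynomial.C (c j) * Polynomial.X ^ j := by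
    refine Polynomial.funext fun x => ?_
    have := h x 1
    rw [hc, hc] at this
    simp only [Polynomial.eval_finsetSum, Polynomial.eval_mul, Polynomial.eval_C,
      Polynomial.eval_pow, Polynomial.eval_X]
    calc _ = ∑ j ∈ Finset.range (n + 1), c j * (ζ * x) ^ j * (ζ⁻¹ * 1) ^ (n - j) :=
          Finset.sum_congr rfl fun j _ => by ring
      _ = _ := this.trans (Finset.sum_congr rfl fun j _ => by simp)
  have hcoeff := congrArg (fun f => Polynomial.coeff f i) hpoly
  simp only [Polynomial.finsetSum_coeff, Polynomial.coeff_C_mul, Polynomial.coeff_X_pow,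
    mul_ite, mul_one, mul_zero, Finset.sum_ite_eq, Finset.mem_range,
    Nat.lt_succ_of_le hi, if_true] at hcoeff
  by_contra hne
  have hζ0 : ζ ≠ 0 := hζ.ne_zero (by norm_num)
  have h1 : ζ ^ i * ζ⁻¹ ^ (n - i) = 1 := by
    apply mul_left_cancel₀ hne
    linear_combination hcoeff
  have h2 : ζ⁻¹ ^ (n - i) * ζ ^ (n - i) = 1 := by
    rw [← mul_pow, inv_mul_cancel₀ hζ0, one_pow]
  have h3 : ζ ^ n = ζ ^ i * ζ ^ (n - i) := by
    rw [← pow_add]; congr 1; omega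
  have h4 : ζ ^ ((2 * i : ℕ) - n : ℤ) = 1 := by
    rw [zpow_sub₀ hζ0, zpow_natCast, zpow_natCast, div_eq_one_iff_eq (pow_ne_zero n hζ0), h3,
      two_mul, pow_add]
    linear_combination -(ζ ^ i * ζ ^ i) * h2 + ζ ^ i * ζ ^ (n - i) * h1
  exact hmod (Nat.modEq_iff_dvd.mpr ((hζ.zpow_eq_one_iff_dvd _).mp h4)).symm

theorem det_entries (A : Matrix.SpecialLinearGroup (Fin 2) ℂ) :
    A 0 0 * A 1 1 - A 0 1 * A 1 0 = 1 := by
  rw [← Matrix.det_fin_two]; exact A.2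

/-- The Taylor coefficients of order at most two of `F` along the second column of `A`,
based at its first column. -/
theorem taylor_F {A : Matrix.SpecialLinearGroup (Fin 2) ℂ} (hA : subst (mat A) F = F)
    {p q r s : ℂ} (hp : A 0 0 = p) (hq : A 1 0 = q) (hr : A 0 1 = r) (hs : A 1 1 = s) :
    p * q * (p ^ 10 - 11 * p ^ 5 * q ^ 5 - q ^ 10) = 0 ∧
    (11 * p ^ 10 * q - 66 * p ^ 5 * q ^ 6 - q ^ 11) * r +
      (p ^ 11 - 66 * p ^ 6 * q ^ 5 - 11 * p * q ^ 10) * s = 1 ∧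
    (110 * p ^ 9 * q - 330 * p ^ 4 * q ^ 6) * r ^ 2 +
      2 * (11 * p ^ 10 - 396 * p ^ 5 * q ^ 5 - 11 * q ^ 10) * r * s +
      (-330 * p ^ 6 * q ^ 4 - 110 * p * q ^ 9) * s ^ 2 = 0 := by
  have hpoly : (Polynomial.C p + Polynomial.C r * Polynomial.X) *
        (Polynomial.C q + Polynomial.C s * Polynomial.X) *
        ((Polynomial.C p + Polynomial.C r * Polynomial.X) ^ 10
          - 11 * (Polynomial.C p + Polynomial.C r * Polynomial.X) ^ 5 *
            (Polynomial.C q + Polynomial.C s * Polynomial.X) ^ 5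
          - (Polynomial.C q + Polynomial.C s * Polynomial.X) ^ 10) =
      Polynomial.X * (1 - 11 * Polynomial.X ^ 5 - Polynomial.X ^ 10) := by
    refine Polynomial.funext fun z => ?_
    have := eval_eq_of_subst_eq hA 1 z
    simpa [F, hp, hq, hr, hs] using this
  have h0 := congrArg (Polynomial.eval 0) hpoly
  have h1 := congrArg (fun f => Polynomial.eval 0 (Polynomial.derivative f)) hpoly
  have h2 := congrArg
    (fun f => Polynomial.eval 0 (Polynomial.derivative (Polynomial.derivative f))) hpoly
  simp [Polynomial.derivative_pow] at h0 h1 h2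
  refine ⟨by simpa using h0, by linear_combination h1, by linear_combination h2⟩

/-- An element of the stabilizer of the line through `(1, 0)` is `diag(a, a⁻¹)` with
`a ^ 10 = 1`. -/
theorem diagonal_of_lower_left_eq_zero {A : Matrix.SpecialLinearGroup (Fin 2) ℂ}
    (hA : subst (mat A) F = F) (h : A 1 0 = 0) :
    A 0 1 = 0 ∧ A 1 1 = (A 0 0)⁻¹ ∧ A 0 0 ^ 10 = 1 := by
  obtain ⟨-, h1, h2⟩ := taylor_F hA rfl h rfl rfl
  have hd := det_entries A
  rw [h] at hd
  have hps : A 0 0 * A 1 1 = 1 := by linear_combination hd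
  have hp0 : A 0 0 ≠ 0 := left_ne_zero_of_mul_eq_one hps
  have hs0 : A 1 1 ≠ 0 := right_ne_zero_of_mul_eq_one hps
  refine ⟨?_, eq_inv_of_mul_eq_one_right hps, by linear_combination h1 - A 0 0 ^ 10 * hps⟩
  have : A 0 0 ^ 10 * A 1 1 * A 0 1 = 0 := by linear_combination h2 / 22
  exact (mul_eq_zero.mp this).resolve_left (mul_ne_zero (pow_ne_zero _ hp0) hs0)

open Classical in
/-- The affine coordinate on the projective line of the first column of `A`. -/
noncomputable def columnSlope (A : Matrix.SpecialLinearGroup (Fin 2) ℂ) : Option ℂ :=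
  if A 1 0 = 0 then none else some (A 0 0 / A 1 0)

theorem lower_left_inv_mul (A B : Matrix.SpecialLinearGroup (Fin 2) ℂ) :
    (A⁻¹ * B) 1 0 = A 0 0 * B 1 0 - A 1 0 * B 0 0 := by
  rw [Matrix.SpecialLinearGroup.coe_mul, Matrix.SpecialLinearGroup.coe_inv,
    Matrix.adjugate_fin_two, Matrix.mul_apply, Fin.sum_univ_two]
  simp
  ring

theorem lower_left_inv_mul_of_columnSlope_eq {A B : Matrix.SpecialLinearGroup (Fin 2) ℂ}
    (h : columnSlope A = columnSlope B) : (A⁻¹ * B) 1 0 = 0 := by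
  rw [lower_left_inv_mul]
  unfold columnSlope at h
  split_ifs at h with hA hB hB
  · simp [hA, hB]
  · have := Option.some.inj h
    field_simp at this
    linear_combination this

open Classical in
/-- The affine coordinates of the twelve zeros of `F` on the projective line. -/
noncomputable def zerosF : Finset (Option ℂ) :=
  insert none (insert (some 0)
    ((Polynomial.X ^ 10 - 11 * Polynomial.X ^ 5 - 1 : Polynomial ℂ).roots.toFinset.image some))

theorem natDegree_affine_F :
    (Polynomial.X ^ 10 - 11 * Polynomial.X ^ 5 - 1 : Polynomial ℂ).natDegree = 10 := by
  compute_degree!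

theorem mem_zerosF (t : ℂ) : some t ∈ zerosF ↔ t = 0 ∨ t ^ 10 - 11 * t ^ 5 - 1 = 0 := by
  have hne : (Polynomial.X ^ 10 - 11 * Polynomial.X ^ 5 - 1 : Polynomial ℂ) ≠ 0 := by
    intro h
    simpa [h] using natDegree_affine_F
  simp [zerosF, Polynomial.mem_roots hne, Polynomial.IsRoot]

theorem card_zerosF_le : zerosF.card ≤ 12 := by
  classical
  refine (Finset.card_insert_le _ _).trans (Nat.succ_le_succ ?_)
  refine (Finset.card_insert_le _ _).trans (Nat.succ_le_succ ?_)
  refine Finset.card_image_le.trans ((Multiset.toFinset_card_le _).trans ?_)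
  exact (Polynomial.card_roots' _).trans natDegree_affine_F.le

theorem columnSlope_mem_zerosF {A : Matrix.SpecialLinearGroup (Fin 2) ℂ}
    (hA : subst (mat A) F = F) : columnSlope A ∈ zerosF := by
  unfold columnSlope
  split_ifs with h
  · simp [zerosF]
  · obtain ⟨h0, -, -⟩ := taylor_F hA rfl rfl rfl rfl
    rw [mem_zerosF]
    rcases mul_eq_zero.mp h0 with h0 | h0
    · left
      simp [(mul_eq_zero.mp h0).resolve_right h]
    · right
      field_simp
      linear_combination h0

/-- `G` acts transitively on the twelve zeros of `F`, and the stabilizer of `(1 : 0)` contains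
every `diag(a, a⁻¹)` with `a ^ 10 = 1`. -/
theorem transitive_and_diagonal_mem
    (G : Subgroup (Matrix.SpecialLinearGroup (Fin 2) ℂ)) (hcard : Nat.card G = 120)
    (hF : ∀ A ∈ G, subst (mat A) F = F) :
    (∀ t ∈ zerosF, ∃ A ∈ G, columnSlope A = t) ∧
    ∀ a : ℂ, a ^ 10 = 1 → ∃ A ∈ G, A 0 0 = a ∧ A 0 1 = 0 ∧ A 1 0 = 0 ∧ A 1 1 = a⁻¹ := by
  classical
  have : Finite G := Nat.finite_of_card_ne_zero (by omega)
  let _ : Fintype G := Fintype.ofFinite G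
  let f : G → Option ℂ := fun A => columnSlope A
  let D : Finset G := {A | A.1 1 0 = 0}
  have hfiber : ∀ t ∈ Finset.univ.image f,
      (Finset.univ.filter (fun A => f A = t)).card ≤ D.card := by
    intro t ht
    obtain ⟨B, -, rfl⟩ := Finset.mem_image.mp ht
    refine Finset.card_le_card_of_injOn (fun A => B⁻¹ * A) ?_ (by simp [Set.InjOn])
    intro A hA
    have hA' : f A = f B := by simpa using hA
    simpa [D] using lower_left_inv_mul_of_columnSlope_eq hA'.symm
  have htotal : 120 ≤ D.card * (Finset.univ.image f).card := by
    have := Finset.card_le_mul_card_image (f := f) Finset.univ _ hfiber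
    rwa [Finset.card_univ, ← Nat.card_eq_fintype_card, hcard] at this
  have hsub : Finset.univ.image f ⊆ zerosF := by
    intro t ht
    obtain ⟨A, -, rfl⟩ := Finset.mem_image.mp ht
    exact columnSlope_mem_zerosF (hF _ A.2)
  have himage : (Finset.univ.image f).card ≤ 12 := (Finset.card_le_card hsub).trans card_zerosF_le
  have hdiag : ∀ A ∈ D, A.1 0 1 = 0 ∧ A.1 1 1 = (A.1 0 0)⁻¹ ∧ A.1 0 0 ^ 10 = 1 := fun A hA =>
    diagonal_of_lower_left_eq_zero (hF _ A.2) (by simpa [D] using hA)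
  have hinj : Set.InjOn (fun A : G => A.1 0 0) D := by
    intro A hA B hB hAB
    have hA' : A.1 1 0 = 0 := by simpa [D] using hA
    have hB' : B.1 1 0 = 0 := by simpa [D] using hB
    have hAB' : A.1 0 0 = B.1 0 0 := hAB
    obtain ⟨hA1, hA2, -⟩ := hdiag A hA
    obtain ⟨hB1, hB2, -⟩ := hdiag B hB
    apply Subtype.ext
    ext i j
    fin_cases i <;> fin_cases j <;> simp [*]
  have hroots : D.image (fun A : G => A.1 0 0) ⊆ Polynomial.nthRootsFinset 10 (1 : ℂ) := by
    intro a ha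
    obtain ⟨A, hA, rfl⟩ := Finset.mem_image.mp ha
    rw [Polynomial.mem_nthRootsFinset (by norm_num)]
    exact (hdiag A hA).2.2
  have hcardroots : (Polynomial.nthRootsFinset 10 (1 : ℂ)).card = 10 :=
    (Complex.isPrimitiveRoot_exp 10 (by norm_num)).card_nthRootsFinset
  have hD : D.card ≤ 10 := by
    rw [← Finset.card_image_of_injOn hinj, ← hcardroots]
    exact Finset.card_le_card hroots
  constructor
  · intro t ht
    have heq : Finset.univ.image f = zerosF :=
      Finset.eq_of_subset_of_card_le hsub (card_zerosF_le.trans (by nlinarith))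
    rw [← heq] at ht
    obtain ⟨A, -, hA⟩ := Finset.mem_image.mp ht
    exact ⟨A, A.2, hA⟩
  · intro a ha
    have heq : D.image (fun A : G => A.1 0 0) = Polynomial.nthRootsFinset 10 (1 : ℂ) := by
      refine Finset.eq_of_subset_of_card_le hroots ?_
      rw [Finset.card_image_of_injOn hinj, hcardroots]
      nlinarith
    have hmem : a ∈ D.image (fun A : G => A.1 0 0) := by
      rw [heq, Polynomial.mem_nthRootsFinset (by norm_num)]
      exact ha
    obtain ⟨A, hA, rfl⟩ := Finset.mem_image.mp hmem
    obtain ⟨h1, h2, -⟩ := hdiag A hA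
    exact ⟨A, A.2, rfl, h1, by simpa [D] using hA, h2⟩

theorem columnSlope_eq_some {A : Matrix.SpecialLinearGroup (Fin 2) ℂ} {t : ℂ}
    (h : columnSlope A = some t) :
    A 1 0 ≠ 0 ∧ A 0 0 = t * A 1 0 := by
  unfold columnSlope at h
  split_ifs at h with h0
  refine ⟨h0, ?_⟩
  rw [← Option.some.inj h]
  field_simp

/-- The entries of an element of `SL(2, ℂ)` preserving `F` and sending `(1 : 0)` to `(t : 1)`,
for `t` a nonzero finite zero of `F`. -/
theorem entries_of_columnSlope {A : Matrix.SpecialLinearGroup (Fin 2) ℂ} (hA : subst (mat A) F = F)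
    {t : ℂ} (ht : t ^ 10 - 11 * t ^ 5 - 1 = 0) (hs : columnSlope A = some t) :
    A 1 0 ^ 10 * (55 * t ^ 5 + 10) = -1 ∧ A 1 1 = -(A 1 0 ^ 9 * t ^ 4 * (5 * t ^ 5 - 15)) := by
  obtain ⟨hq, hp⟩ := columnSlope_eq_some hs
  obtain ⟨-, h1, h2⟩ := taylor_F hA hp rfl rfl rfl
  have hd := det_entries A
  rw [hp] at hd
  generalize A 1 0 = q at *
  generalize A 1 1 = s at *
  have hr : A 0 1 = t * s - q⁻¹ := by
    field_simp
    linear_combination -hd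
  have hk : q * q⁻¹ = 1 := mul_inv_cancel₀ hq
  rw [hr] at h1 h2
  generalize q⁻¹ = k at *
  have h3 : q ^ 10 * (55 * t ^ 5 + 10) = -1 := by
    linear_combination -h1 + (12 * q ^ 11 * t * s - 11 * q ^ 10) * ht -
      q ^ 10 * (11 * t ^ 10 - 66 * t ^ 5 - 1) * hk
  refine ⟨h3, ?_⟩
  linear_combination (q * h2 + (242 * s * q ^ 10 - 132 * q ^ 11 * s ^ 2 * t) * ht
    + (22 * s * q ^ 10 * (11 * t ^ 10 - 66 * t ^ 5 - 1)
      - (q * k + 1) * q ^ 9 * t ^ 4 * (110 * t ^ 5 - 330)) * hk + 22 * s * h3) / 22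

theorem exists_zeros :
    ∃ t₁ t₂ : ℂ, t₁ ^ 10 - 11 * t₁ ^ 5 - 1 = 0 ∧ t₂ ^ 10 - 11 * t₂ ^ 5 - 1 = 0 ∧
      t₁ ^ 5 ≠ t₂ ^ 5 := by
  obtain ⟨d, hd⟩ := IsAlgClosed.exists_pow_nat_eq (125 : ℂ) (n := 2) (by norm_num)
  obtain ⟨t₁, h₁⟩ := IsAlgClosed.exists_pow_nat_eq ((11 + d) / 2) (n := 5) (by norm_num)
  obtain ⟨t₂, h₂⟩ := IsAlgClosed.exists_pow_nat_eq ((11 - d) / 2) (n := 5) (by norm_num)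
  refine ⟨t₁, t₂, ?_, ?_, ?_⟩
  · linear_combination (t₁ ^ 5 + (11 + d) / 2 - 11) * h₁ + hd / 4
  · linear_combination (t₂ ^ 5 + (11 - d) / 2 - 11) * h₂ + hd / 4
  · rw [h₁, h₂]
    intro h
    have : d = 0 := by linear_combination h
    norm_num [this] at hd

theorem eq_of_eval_fin_two {P Q : MvPolynomial (Fin 2) ℂ}
    (h : ∀ x y : ℂ, eval ![x, y] P = eval ![x, y] Q) : P = Q := by
  refine MvPolynomial.funext fun v => ?_
  rw [show v = ![v 0, v 1] by ext i; fin_cases i <;> rfl]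
  exact h _ _

/-- For any order-120 subgroup `G` of `SL(2,ℂ)` leaving `F` invariant (the binary
icosahedral group): every `G`-invariant homogeneous polynomial of degree 12 is a scalar
multiple of `F`, and every `G`-invariant homogeneous polynomial of degree 20 is a
scalar multiple of `H`. -/
theorem invariants_in_degrees_12_and_20
    (G : Subgroup (Matrix.SpecialLinearGroup (Fin 2) ℂ)) (hcard : Nat.card G = 120)
    (hF : ∀ A ∈ G, subst (mat A) F = F) :
    (∀ P : MvPolynomial (Fin 2) ℂ, P.IsHomogeneous 12 →
      (∀ A ∈ G, subst (mat A) P = P) → ∃ c : ℂ, P = C c * F) ∧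
    (∀ P : MvPolynomial (Fin 2) ℂ, P.IsHomogeneous 20 →
      (∀ A ∈ G, subst (mat A) P = P) → ∃ c : ℂ, P = C c * H) := by
  obtain ⟨htrans, hdiag⟩ := transitive_and_diagonal_mem G hcard hF
  have hζ : IsPrimitiveRoot (Complex.exp (2 * Real.pi * Complex.I / (10 : ℕ))) 10 :=
    Complex.isPrimitiveRoot_exp 10 (by norm_num)
  generalize Complex.exp (2 * Real.pi * Complex.I / (10 : ℕ)) = ζ at hζ
  obtain ⟨Z, hZ, hZ00, hZ01, hZ10, hZ11⟩ := hdiag ζ hζ.pow_eq_one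
  have hform : ∀ (P : MvPolynomial (Fin 2) ℂ), (∀ A ∈ G, subst (mat A) P = P) →
      ∀ x y : ℂ, eval ![ζ * x, ζ⁻¹ * y] P = eval ![x, y] P := fun P hP x y => by
    simpa [hZ00, hZ01, hZ10, hZ11] using eval_eq_of_subst_eq (hP Z hZ) x y
  obtain ⟨t₁, t₂, ht₁, ht₂, hne⟩ := exists_zeros
  have hlift : ∀ t : ℂ, t ^ 10 - 11 * t ^ 5 - 1 = 0 → ∃ A ∈ G, columnSlope A = some t := fun t ht =>
    htrans _ ((mem_zerosF t).mpr (Or.inr ht))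
  have ht0 : ∀ t : ℂ, t ^ 10 - 11 * t ^ 5 - 1 = 0 → t ≠ 0 := by
    rintro t ht rfl
    norm_num at ht
  constructor
  · intro P hP hinv
    obtain ⟨c, hc0, hc⟩ := exists_coeff_of_diagonal_invariant hP hζ (hform P hinv)
    have hc' : ∀ x y : ℂ, eval ![x, y] P =
        c 11 * x ^ 11 * y + c 6 * x ^ 6 * y ^ 6 + c 1 * x * y ^ 11 := fun x y => by
      rw [hc]
      simp [Finset.sum_range_succ, hc0 0 (by decide) (by decide), hc0 2 (by decide) (by decide),
        hc0 3 (by decide) (by decide), hc0 4 (by decide) (by decide),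
        hc0 5 (by decide) (by decide), hc0 7 (by decide) (by decide),
        hc0 8 (by decide) (by decide), hc0 9 (by decide) (by decide),
        hc0 10 (by decide) (by decide), hc0 12 (by decide) (by decide)]
      ring
    have hvan : ∀ t : ℂ, t ^ 10 - 11 * t ^ 5 - 1 = 0 →
        c 11 * (t ^ 5) ^ 2 + c 6 * t ^ 5 + c 1 = 0 := fun t ht => by
      obtain ⟨A, hA, hs⟩ := hlift t ht
      obtain ⟨hq, hp⟩ := columnSlope_eq_some hs
      have h := eval_eq_of_subst_eq (hinv A hA) 1 0
      rw [hc', hc', hp] at h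
      apply mul_left_cancel₀ (mul_ne_zero (pow_ne_zero 12 hq) (ht0 t ht))
      linear_combination h
    have h₁ := hvan t₁ ht₁
    have h₂ := hvan t₂ ht₂
    have h6 : c 6 + 11 * c 11 = 0 := by
      apply mul_left_cancel₀ (sub_ne_zero.mpr hne)
      linear_combination h₁ - h₂ - c 11 * (ht₁ - ht₂)
    refine ⟨c 11, eq_of_eval_fin_two fun x y => ?_⟩
    rw [hc']
    simp only [F, map_mul, map_sub, map_pow, eval_C, eval_X, map_ofNat, Matrix.cons_val_zero,
      Matrix.cons_val_one]
    linear_combination x ^ 6 * y ^ 6 * h6 +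
      x * y ^ 11 * (h₁ - c 11 * ht₁ - t₁ ^ 5 * h6)
  · intro P hP hinv
    obtain ⟨c, hc0, hc⟩ := exists_coeff_of_diagonal_invariant hP hζ (hform P hinv)
    have hc' : ∀ x y : ℂ, eval ![x, y] P =
        c 20 * x ^ 20 + c 15 * x ^ 15 * y ^ 5 + c 10 * x ^ 10 * y ^ 10 +
          c 5 * x ^ 5 * y ^ 15 + c 0 * y ^ 20 := fun x y => by
      rw [hc]
      simp [Finset.sum_range_succ, hc0 1 (by decide) (by decide), hc0 2 (by decide) (by decide),
        hc0 3 (by decide) (by decide), hc0 4 (by decide) (by decide),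
        hc0 6 (by decide) (by decide), hc0 7 (by decide) (by decide),
        hc0 8 (by decide) (by decide), hc0 9 (by decide) (by decide),
        hc0 11 (by decide) (by decide), hc0 12 (by decide) (by decide),
        hc0 13 (by decide) (by decide), hc0 14 (by decide) (by decide),
        hc0 16 (by decide) (by decide), hc0 17 (by decide) (by decide),
        hc0 18 (by decide) (by decide), hc0 19 (by decide) (by decide)]
      ring
    have h0 : c 0 = c 20 := by
      obtain ⟨A, hA, hs⟩ := htrans (some 0) ((mem_zerosF 0).mpr (Or.inl rfl))
      obtain ⟨hq, hp⟩ := columnSlope_eq_some hs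
      rw [zero_mul] at hp
      have h := eval_eq_of_subst_eq (hinv A hA) 1 0
      rw [hc', hc', hp] at h
      obtain ⟨-, h1, -⟩ := taylor_F (hF A hA) hp rfl rfl rfl
      have hd := det_entries A
      rw [hp] at hd
      have hq10 : A 1 0 ^ 10 = 1 := by linear_combination h1 - A 1 0 ^ 10 * hd
      linear_combination h - c 0 * (A 1 0 ^ 10 + 1) * hq10
    have hvan : ∀ t : ℂ, t ^ 10 - 11 * t ^ 5 - 1 = 0 →
        (c 15 - 228 * c 20) * (t ^ 5) ^ 2 + (c 10 - 494 * c 20) * t ^ 5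
          + (c 5 + 228 * c 20) = 0 := fun t ht => by
      obtain ⟨A, hA, hs⟩ := hlift t ht
      obtain ⟨hq, hp⟩ := columnSlope_eq_some hs
      obtain ⟨hq10, -⟩ := entries_of_columnSlope (hF A hA) ht hs
      have h := eval_eq_of_subst_eq (hinv A hA) 1 0
      rw [hc', hc', hp, h0] at h
      apply mul_left_cancel₀ (mul_ne_zero (pow_ne_zero 20 hq) (pow_ne_zero 5 (ht0 t ht)))
      linear_combination h - c 20 * (A 1 0 ^ 20 * (t ^ 10 + 239 * t ^ 5 + 99) * ht +
        (A 1 0 ^ 10 * (55 * t ^ 5 + 10) - 1) * hq10)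
    have h₁ := hvan t₁ ht₁
    have h₂ := hvan t₂ ht₂
    have h10 : (c 10 - 494 * c 20) + 11 * (c 15 - 228 * c 20) = 0 := by
      apply mul_left_cancel₀ (sub_ne_zero.mpr hne)
      linear_combination h₁ - h₂ - (c 15 - 228 * c 20) * (ht₁ - ht₂)
    have h5 : (c 5 + 228 * c 20) + (c 15 - 228 * c 20) = 0 := by
      linear_combination h₁ - (c 15 - 228 * c 20) * ht₁ - t₁ ^ 5 * h10
    have h15 : c 15 - 228 * c 20 = 0 := by
      obtain ⟨A, hA, hs⟩ := hlift t₁ ht₁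
      obtain ⟨hq, hp⟩ := columnSlope_eq_some hs
      obtain ⟨hq10, hs'⟩ := entries_of_columnSlope (hF A hA) ht₁ hs
      have hd := det_entries A
      have hderiv : (20 * c 20 * A 0 0 ^ 19 + 15 * c 15 * A 0 0 ^ 14 * A 1 0 ^ 5
            + 10 * c 10 * A 0 0 ^ 9 * A 1 0 ^ 10 + 5 * c 5 * A 0 0 ^ 4 * A 1 0 ^ 15) * A 0 1
          + (5 * c 15 * A 0 0 ^ 15 * A 1 0 ^ 4 + 10 * c 10 * A 0 0 ^ 10 * A 1 0 ^ 9
            + 15 * c 5 * A 0 0 ^ 5 * A 1 0 ^ 14 + 20 * c 0 * A 1 0 ^ 19) * A 1 1 = 0 := by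
        have hpoly : Polynomial.C (c 20) *
              (Polynomial.C (A 0 0) + Polynomial.C (A 0 1) * Polynomial.X) ^ 20
            + Polynomial.C (c 15) *
              (Polynomial.C (A 0 0) + Polynomial.C (A 0 1) * Polynomial.X) ^ 15 *
              (Polynomial.C (A 1 0) + Polynomial.C (A 1 1) * Polynomial.X) ^ 5
            + Polynomial.C (c 10) *
              (Polynomial.C (A 0 0) + Polynomial.C (A 0 1) * Polynomial.X) ^ 10 *
              (Polynomial.C (A 1 0) + Polynomial.C (A 1 1) * Polynomial.X) ^ 10
            + Polynomial.C (c 5) *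
              (Polynomial.C (A 0 0) + Polynomial.C (A 0 1) * Polynomial.X) ^ 5 *
              (Polynomial.C (A 1 0) + Polynomial.C (A 1 1) * Polynomial.X) ^ 15
            + Polynomial.C (c 0) *
              (Polynomial.C (A 1 0) + Polynomial.C (A 1 1) * Polynomial.X) ^ 20
            = Polynomial.C (c 20) + Polynomial.C (c 15) * Polynomial.X ^ 5
              + Polynomial.C (c 10) * Polynomial.X ^ 10 + Polynomial.C (c 5) * Polynomial.X ^ 15
              + Polynomial.C (c 0) * Polynomial.X ^ 20 := by
          refine Polynomial.funext fun z => ?_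
          have := eval_eq_of_subst_eq (hinv A hA) 1 z
          rw [hc', hc'] at this
          simpa using this
        have h1 := congrArg (fun f => Polynomial.eval 0 (Polynomial.derivative f)) hpoly
        simp [Polynomial.derivative_pow] at h1
        linear_combination h1
      have hval := eval_eq_of_subst_eq (hinv A hA) 1 0
      rw [hc', hc', hp] at hval
      rw [hp] at hderiv hd
      have hW : A 1 0 ^ 9 * t₁ ^ 4 * (20 * c 20 * (5 * t₁ ^ 5 - 15) + A 1 0 ^ 10 *
          (20 * c 20 * t₁ ^ 15 + 15 * c 15 * t₁ ^ 10 + 10 * c 10 * t₁ ^ 5 + 5 * c 5)) = 0 := by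
        linear_combination -A 1 0 * hderiv - A 1 0 ^ 19 * t₁ ^ 4 *
          (20 * c 20 * t₁ ^ 15 + 15 * c 15 * t₁ ^ 10 + 10 * c 10 * t₁ ^ 5 + 5 * c 5) * hd
          + 20 * A 1 1 * hval + 20 * c 20 * hs'
      have hW' := (mul_eq_zero.mp hW).resolve_left
        (mul_ne_zero (pow_ne_zero 9 hq) (pow_ne_zero 4 (ht0 t₁ ht₁)))
      linear_combination -hW' + (20 * c 20 * (5 * t₁ ^ 5 - 15) + (c 15 - 228 * c 20)) * hq10
        + A 1 0 ^ 10 * (20 * c 20 * (t₁ ^ 5 - 93) + 15 * (c 15 - 228 * c 20)) * ht₁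
        + A 1 0 ^ 10 * (10 * t₁ ^ 5 * h10 + 5 * h5)
    refine ⟨c 20, eq_of_eval_fin_two fun x y => ?_⟩
    rw [hc']
    simp only [H, map_mul, map_sub, map_add, map_pow, eval_C, eval_X, map_ofNat,
      Matrix.cons_val_zero, Matrix.cons_val_one]
    linear_combination x ^ 15 * y ^ 5 * h15 + x ^ 10 * y ^ 10 * (h10 - 11 * h15) +
      x ^ 5 * y ^ 15 * (h5 - h15) + y ^ 20 * h0
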